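/- Let d ≥ 1, let p : ℝᵈ → (0,∞) be a continuously differentiable probability density whose score s(x) := ∇ log p(x) is Lipschitz continuous on ℝᵈ, and let α, σ > 0. Let γ denote the standard Gaussian measure on ℝᵈ, define the noise-prediction function ε_θ(x) := −σ·∇ log p(x), and define F(z) := KL( N(α·z, σ²·I) ‖ p ) = ∫ φ_σ(x − α·z)·log( φ_σ(x − α·z)/p(x) ) dx. Then F is finite and differentiable on ℝᵈ, and for every z ∈ ℝᵈ its gradient equals ∇F(z) = (α/σ)·∫ ( ε_θ(α·z + σ·ε) − ε ) dγ(ε). -/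

import Mathlib

/-!
Translating by `α z`, the objective becomes `F z = ∫ φ_σ(u) (log φ_σ(u) - log p(u + α z)) du`, in
which `z` enters only through the potential `log p`. A Lipschitz score grows at most linearly and
`log p` at most quadratically (`potential_growth`), so the Gaussian weight dominates the integrand
and its `z`-derivative, locally uniformly in `z` (`integrable_gauss_smul`). Differentiating
under the integral sign gives `∇F z = -α ∫ φ_σ(u) s(u + α z) du`. The substitution `u = σ ε`
(`integral_gauss_scale`) turns this into an expectation over the standard Gaussian, and the control
variate `ε` drops out because its mean vanishes by symmetry (`integral_gauss_id`).
-/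

open MeasureTheory Real

/-- The isotropic Gaussian density on `ℝᵈ` with mean `0` and covariance `σ² I`:
`φ_σ(v) = (2πσ²)^(−d/2) exp(−‖v‖²/(2σ²))`. -/
noncomputable def gaussDensity (d : ℕ) (σ : ℝ) (v : EuclideanSpace ℝ (Fin d)) : ℝ :=
  (2 * Real.pi * σ ^ 2) ^ (-(d : ℝ) / 2) * Real.exp (-‖v‖ ^ 2 / (2 * σ ^ 2))

/-- The standard Gaussian measure `N(0, I)` on `ℝᵈ`. -/
noncomputable def stdGaussian (d : ℕ) : Measure (EuclideanSpace ℝ (Fin d)) :=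
  volume.withDensity fun v => ENNReal.ofReal (gaussDensity d 1 v)

open InnerProductSpace

local notation "𝔼" d => EuclideanSpace ℝ (Fin d)

lemma gaussDensity_pos (d : ℕ) {σ : ℝ} (hσ : 0 < σ) (v : 𝔼 d) : 0 < gaussDensity d σ v := by
  unfold gaussDensity
  positivity

lemma gaussDensity_continuous (d : ℕ) (σ : ℝ) : Continuous (gaussDensity d σ) := by
  unfold gaussDensity
  fun_prop

lemma integrable_exp_neg_mul_sq_norm (d : ℕ) {b : ℝ} (hb : 0 < b) :
    Integrable (fun v : 𝔼 d => Real.exp (-b * ‖v‖ ^ 2)) := by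
  have h := (GaussianFourier.integrable_cexp_neg_mul_sq_norm_add (V := 𝔼 d)
    (b := (b : ℂ)) (by simpa using hb) 0 0).norm
  refine h.congr (Filter.Eventually.of_forall fun v => ?_)
  simp only [Complex.norm_exp]
  congr 1
  simp [← Complex.ofReal_pow]

lemma integrable_gauss_weight (d : ℕ) {σ : ℝ} (hσ : 0 < σ) :
    Integrable (fun v : 𝔼 d => gaussDensity d σ v * (1 + ‖v‖ ^ 2)) := by
  set b : ℝ := 1 / (4 * σ ^ 2) with hb
  have hb0 : 0 < b := by positivity
  set c : ℝ := (2 * Real.pi * σ ^ 2) ^ (-(d : ℝ) / 2)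
  have hc : 0 ≤ c := by positivity
  refine ((integrable_exp_neg_mul_sq_norm d hb0).const_mul (c * (1 + 1 / b))).mono'
    ((gaussDensity_continuous d σ).mul (by fun_prop)).aestronglyMeasurable
    (Filter.Eventually.of_forall fun v => ?_)
  rw [Real.norm_of_nonneg (mul_nonneg (gaussDensity_pos d hσ v).le (by positivity))]
  have hsplit : gaussDensity d σ v
      = c * (Real.exp (-b * ‖v‖ ^ 2) * Real.exp (-b * ‖v‖ ^ 2)) := by
    rw [← Real.exp_add]
    unfold gaussDensity
    congr 2
    rw [hb]
    field_simp
    ring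
  -- Half of the exponent absorbs the polynomial factor, by `t ≤ exp t` at `t = b ‖v‖²`.
  have hhalf : Real.exp (-b * ‖v‖ ^ 2) * (1 + ‖v‖ ^ 2) ≤ 1 + 1 / b := by
    have h1 : b * ‖v‖ ^ 2 ≤ Real.exp (b * ‖v‖ ^ 2) := by
      linarith [Real.add_one_le_exp (b * ‖v‖ ^ 2)]
    have h2 : 1 ≤ Real.exp (b * ‖v‖ ^ 2) := Real.one_le_exp (by positivity)
    have h3 : ‖v‖ ^ 2 ≤ 1 / b * Real.exp (b * ‖v‖ ^ 2) := by
      rw [one_div, inv_mul_eq_div, le_div_iff₀ hb0]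
      linarith
    have h4 : Real.exp (-b * ‖v‖ ^ 2) * Real.exp (b * ‖v‖ ^ 2) = 1 := by
      rw [← Real.exp_add]
      simp
    calc Real.exp (-b * ‖v‖ ^ 2) * (1 + ‖v‖ ^ 2)
        ≤ Real.exp (-b * ‖v‖ ^ 2) * ((1 + 1 / b) * Real.exp (b * ‖v‖ ^ 2)) := by
          gcongr
          linarith
      _ = (1 + 1 / b) * (Real.exp (-b * ‖v‖ ^ 2) * Real.exp (b * ‖v‖ ^ 2)) := by ring
      _ = 1 + 1 / b := by rw [h4, mul_one]
  calc gaussDensity d σ v * (1 + ‖v‖ ^ 2)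
      = c * Real.exp (-b * ‖v‖ ^ 2) * (Real.exp (-b * ‖v‖ ^ 2) * (1 + ‖v‖ ^ 2)) := by
        rw [hsplit]
        ring
    _ ≤ c * Real.exp (-b * ‖v‖ ^ 2) * (1 + 1 / b) := by gcongr
    _ = c * (1 + 1 / b) * Real.exp (-b * ‖v‖ ^ 2) := by ring

/-- Continuous functions of at most quadratic growth are integrable against a Gaussian. -/
lemma integrable_gauss_smul {d : ℕ} {σ : ℝ} (hσ : 0 < σ) {G : Type*} [NormedAddCommGroup G]
    [NormedSpace ℝ G] {f : (𝔼 d) → G} (hf : Continuous f) (C : ℝ)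
    (hC : ∀ u, ‖f u‖ ≤ C * (1 + ‖u‖ ^ 2)) :
    Integrable (fun u => gaussDensity d σ u • f u) := by
  refine ((integrable_gauss_weight d hσ).const_mul C).mono'
    ((gaussDensity_continuous d σ).smul hf).aestronglyMeasurable
    (Filter.Eventually.of_forall fun u => ?_)
  have hpos := gaussDensity_pos d hσ u
  rw [norm_smul, Real.norm_of_nonneg hpos.le]
  calc gaussDensity d σ u * ‖f u‖ ≤ gaussDensity d σ u * (C * (1 + ‖u‖ ^ 2)) := by
        gcongr
        exact hC u
    _ = C * (gaussDensity d σ u * (1 + ‖u‖ ^ 2)) := by ring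

lemma integral_gauss_scale {d : ℕ} {σ : ℝ} (hσ : 0 < σ) {G : Type*} [NormedAddCommGroup G]
    [NormedSpace ℝ G] (g : (𝔼 d) → G) :
    ∫ u, gaussDensity d σ u • g u = ∫ v, gaussDensity d 1 v • g (σ • v) := by
  have hdens : ∀ v : 𝔼 d, gaussDensity d 1 v = σ ^ d * gaussDensity d σ (σ • v) := by
    intro v
    unfold gaussDensity
    have h1 : (2 * Real.pi * σ ^ 2) ^ (-(d : ℝ) / 2)
        = (2 * Real.pi * 1 ^ 2) ^ (-(d : ℝ) / 2) * (σ ^ d)⁻¹ := by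
      rw [Real.mul_rpow (by positivity) (by positivity), one_pow, mul_one,
        ← Real.rpow_natCast σ 2, ← Real.rpow_mul hσ.le, ← Real.rpow_natCast σ d,
        ← Real.rpow_neg hσ.le]
      congr 2
      push_cast
      ring
    have h2 : -‖σ • v‖ ^ 2 / (2 * σ ^ 2) = -‖v‖ ^ 2 / (2 * 1 ^ 2) := by
      rw [norm_smul, Real.norm_of_nonneg hσ.le]
      field_simp
    rw [h1, h2]
    field_simp
  have h := Measure.integral_comp_smul (volume : Measure (𝔼 d))
    (fun u => gaussDensity d σ u • g u) σ
  simp only [finrank_euclideanSpace, Fintype.card_fin] at h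
  simp_rw [hdens, mul_smul]
  rw [integral_smul, h, abs_of_pos (by positivity), smul_smul,
    mul_inv_cancel₀ (by positivity), one_smul]

lemma integral_gauss_id (d : ℕ) : ∫ v : 𝔼 d, gaussDensity d 1 v • v = 0 := by
  have h := integral_neg_eq_self (fun v : 𝔼 d => gaussDensity d 1 v • v) volume
  have hodd : ∀ v : 𝔼 d, gaussDensity d 1 (-v) • (-v) = -(gaussDensity d 1 v • v) := by
    intro v
    simp [gaussDensity]
  simp_rw [hodd] at h
  rw [integral_neg] at h
  have h2 : (2 : ℝ) • ∫ v : 𝔼 d, gaussDensity d 1 v • v = 0 := by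
    rw [two_smul]
    nth_rewrite 1 [← h]
    exact neg_add_cancel _
  exact (smul_eq_zero.mp h2).resolve_left two_ne_zero

lemma integral_stdGaussian {d : ℕ} {G : Type*} [NormedAddCommGroup G] [NormedSpace ℝ G]
    (g : (𝔼 d) → G) :
    ∫ v, g v ∂stdGaussian d = ∫ v, gaussDensity d 1 v • g v := by
  unfold stdGaussian
  rw [integral_withDensity_eq_integral_toReal_smul
    (gaussDensity_continuous d 1).measurable.ennreal_ofReal
    (Filter.Eventually.of_forall fun _ => ENNReal.ofReal_lt_top)]
  simp_rw [ENNReal.toReal_ofReal (gaussDensity_pos d one_pos _).le]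

lemma lipschitz_growth {d : ℕ} {s : (𝔼 d) → 𝔼 d} {K : NNReal} (hK : LipschitzWith K s)
    (x : 𝔼 d) : ‖s x‖ ≤ ‖s 0‖ + K * ‖x‖ := by
  have h := hK.dist_le_mul x 0
  rw [dist_eq_norm, dist_zero_right] at h
  linarith [norm_le_norm_add_norm_sub' (s x) (s 0)]

/-- A potential with Lipschitz gradient grows at most quadratically. -/
lemma potential_growth {d : ℕ} {s : (𝔼 d) → 𝔼 d} {K : NNReal} (hK : LipschitzWith K s)
    {L : (𝔼 d) → ℝ} (hL : ∀ x, HasGradientAt L (s x) x) (x : 𝔼 d) :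
    ‖L x‖ ≤ ‖L 0‖ + (‖s 0‖ + K * ‖x‖) * ‖x‖ := by
  have h := (convex_closedBall (0 : 𝔼 d) ‖x‖).norm_image_sub_le_of_norm_hasFDerivWithin_le
    (f := L) (f' := fun y => toDual ℝ (𝔼 d) (s y)) (C := ‖s 0‖ + K * ‖x‖)
    (x := 0) (y := x) (fun y _ => (hL y).hasFDerivAt.hasFDerivWithinAt)
    (fun y hy => by
      rw [LinearIsometryEquiv.norm_map]
      refine (lipschitz_growth hK y).trans ?_
      have : ‖y‖ ≤ ‖x‖ := by simpa using hy
      gcongr) (by simp) (by simp)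
  rw [sub_zero] at h
  linarith [norm_le_norm_add_norm_sub' (L x) (L 0)]

lemma growth_shift {d : ℕ} {s : (𝔼 d) → 𝔼 d} {K : NNReal} (hK : LipschitzWith K s)
    {R : ℝ} {w : 𝔼 d} (hw : ‖w‖ ≤ R) (u : 𝔼 d) :
    ‖s (u + w)‖ ≤ (‖s 0‖ + K * (1 + R)) * (1 + ‖u‖ ^ 2) := by
  have h1 := lipschitz_growth hK (u + w)
  have h2 : ‖u + w‖ ≤ ‖u‖ + R := (norm_add_le u w).trans (by gcongr)
  have hR : 0 ≤ R := (norm_nonneg w).trans hw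
  have h3 : ‖u‖ + R ≤ (1 + R) * (1 + ‖u‖ ^ 2) := by
    nlinarith [sq_nonneg (‖u‖ - 1), mul_nonneg hR (sq_nonneg ‖u‖)]
  calc ‖s (u + w)‖ ≤ ‖s 0‖ * 1 + K * ((1 + R) * (1 + ‖u‖ ^ 2)) := by
        rw [mul_one]
        refine h1.trans ?_
        gcongr
        exact h2.trans h3
    _ ≤ ‖s 0‖ * (1 + ‖u‖ ^ 2) + K * ((1 + R) * (1 + ‖u‖ ^ 2)) := by
        gcongr
        nlinarith [sq_nonneg ‖u‖]
    _ = _ := by ring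

lemma potential_growth_shift {d : ℕ} {s : (𝔼 d) → 𝔼 d} {K : NNReal} (hK : LipschitzWith K s)
    {L : (𝔼 d) → ℝ} (hL : ∀ x, HasGradientAt L (s x) x) (w u : 𝔼 d) :
    ‖L (u + w)‖ ≤ (‖L 0‖ + (‖s 0‖ + K) * (2 + 2 * ‖w‖ ^ 2)) * (1 + ‖u‖ ^ 2) := by
  have h1 := potential_growth hK hL (u + w)
  have h2 := norm_add_le u w
  set t := ‖u + w‖
  have ht : 0 ≤ t := norm_nonneg _
  have ht2 : 1 + t ^ 2 ≤ (2 + 2 * ‖w‖ ^ 2) * (1 + ‖u‖ ^ 2) := by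
    have : t ^ 2 ≤ (‖u‖ + ‖w‖) ^ 2 := by gcongr
    nlinarith [sq_nonneg (‖u‖ - ‖w‖), mul_nonneg (sq_nonneg ‖u‖) (sq_nonneg ‖w‖)]
  calc ‖L (u + w)‖ ≤ ‖L 0‖ + (‖s 0‖ + K * t) * t := h1
    _ ≤ ‖L 0‖ * 1 + (‖s 0‖ + K) * (1 + t ^ 2) := by
        nlinarith [mul_nonneg (norm_nonneg (s 0)) (sq_nonneg (t - 1)),
          mul_nonneg (norm_nonneg (s 0)) (sq_nonneg t), K.coe_nonneg, norm_nonneg (s 0)]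
    _ ≤ ‖L 0‖ * (1 + ‖u‖ ^ 2) + (‖s 0‖ + K) * ((2 + 2 * ‖w‖ ^ 2) * (1 + ‖u‖ ^ 2)) := by
        gcongr
        nlinarith [sq_nonneg ‖u‖]
    _ = _ := by ring

lemma integrable_gauss_log_sub {d : ℕ} {σ : ℝ} (hσ : 0 < σ) {s : (𝔼 d) → 𝔼 d} {K : NNReal}
    (hK : LipschitzWith K s) {L : (𝔼 d) → ℝ} (hL : ∀ x, HasGradientAt L (s x) x) (w : 𝔼 d) :
    Integrable (fun u => gaussDensity d σ u * (Real.log (gaussDensity d σ u) - L (u + w))) := by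
  have hLc : Continuous L := continuous_iff_continuousAt.2 fun x => (hL x).continuousAt
  set c : ℝ := (2 * Real.pi * σ ^ 2) ^ (-(d : ℝ) / 2) with hc
  have hlog : ∀ u : 𝔼 d,
      Real.log (gaussDensity d σ u) = Real.log c - ‖u‖ ^ 2 / (2 * σ ^ 2) := by
    intro u
    unfold gaussDensity
    rw [Real.log_mul (by positivity) (Real.exp_ne_zero _), Real.log_exp, hc]
    ring
  have h1 : Integrable (fun u : 𝔼 d =>
      gaussDensity d σ u • (Real.log c - ‖u‖ ^ 2 / (2 * σ ^ 2))) := by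
    refine integrable_gauss_smul hσ (by fun_prop) (‖Real.log c‖ + 1 / (2 * σ ^ 2)) fun u => ?_
    have hb : 0 ≤ 1 / (2 * σ ^ 2) := by positivity
    calc ‖Real.log c - ‖u‖ ^ 2 / (2 * σ ^ 2)‖
        ≤ ‖Real.log c‖ + ‖‖u‖ ^ 2 / (2 * σ ^ 2)‖ := norm_sub_le _ _
      _ = ‖Real.log c‖ + 1 / (2 * σ ^ 2) * ‖u‖ ^ 2 := by
          rw [Real.norm_of_nonneg (r := ‖u‖ ^ 2 / (2 * σ ^ 2)) (by positivity)]
          ring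
      _ ≤ _ := by nlinarith [mul_nonneg (norm_nonneg (Real.log c)) (sq_nonneg ‖u‖)]
  have h2 : Integrable (fun u : 𝔼 d => gaussDensity d σ u • L (u + w)) :=
    integrable_gauss_smul hσ (by fun_prop) _ (potential_growth_shift hK hL w)
  refine (h1.sub h2).congr (Filter.Eventually.of_forall fun u => ?_)
  simp only [Pi.sub_apply, smul_eq_mul, hlog]
  ring

/-- Differentiation under the integral sign for the translated objective. -/
lemma hasGradientAt_objective {d : ℕ} {σ : ℝ} (hσ : 0 < σ) (α : ℝ) {s : (𝔼 d) → 𝔼 d}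
    {K : NNReal} (hK : LipschitzWith K s) {L : (𝔼 d) → ℝ}
    (hL : ∀ x, HasGradientAt L (s x) x) (z : 𝔼 d) :
    HasGradientAt
      (fun z => ∫ u, gaussDensity d σ u * (Real.log (gaussDensity d σ u) - L (u + α • z)))
      (-α • ∫ u, gaussDensity d σ u • s (u + α • z)) z := by
  have hsc := hK.continuous
  set R : ℝ := |α| * (‖z‖ + 1)
  have hball : ∀ y ∈ Metric.ball z 1, ‖α • y‖ ≤ R := by
    intro y hy
    rw [norm_smul, Real.norm_eq_abs]
    have : ‖y - z‖ < 1 := by simpa [dist_eq_norm] using hy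
    have := norm_le_norm_add_norm_sub' y z
    exact mul_le_mul_of_nonneg_left (by linarith) (abs_nonneg α)
  set C : ℝ := ‖s 0‖ + K * (1 + R)
  have key := hasFDerivAt_integral_of_dominated_of_fderiv_le (μ := volume) (𝕜 := ℝ)
    (F := fun (z : 𝔼 d) (u : 𝔼 d) =>
      gaussDensity d σ u * (Real.log (gaussDensity d σ u) - L (u + α • z)))
    (F' := fun y u => toDual ℝ (𝔼 d) (-α • gaussDensity d σ u • s (u + α • y)))
    (x₀ := z) (s := Metric.ball z 1)
    (bound := fun u => |α| * C * (gaussDensity d σ u * (1 + ‖u‖ ^ 2)))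
    (Metric.ball_mem_nhds z one_pos)
    (Filter.Eventually.of_forall fun y =>
      (integrable_gauss_log_sub hσ hK hL (α • y)).aestronglyMeasurable)
    (integrable_gauss_log_sub hσ hK hL (α • z))
    (by
      have := gaussDensity_continuous d σ
      exact Continuous.aestronglyMeasurable (by fun_prop))
    (Filter.Eventually.of_forall fun u y hy => by
      have hpos := gaussDensity_pos d hσ u
      rw [LinearIsometryEquiv.norm_map, norm_smul, norm_smul, norm_neg, Real.norm_eq_abs,
        Real.norm_of_nonneg hpos.le]
      calc |α| * (gaussDensity d σ u * ‖s (u + α • y)‖)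
          ≤ |α| * (gaussDensity d σ u * (C * (1 + ‖u‖ ^ 2))) := by
            gcongr
            exact growth_shift hK (hball y hy) u
        _ = _ := by ring)
    ((integrable_gauss_weight d hσ).const_mul _)
    (Filter.Eventually.of_forall fun u y _ => by
      have hin : HasFDerivAt (fun y : 𝔼 d => u + α • y)
          (α • ContinuousLinearMap.id ℝ (𝔼 d)) y :=
        ((hasFDerivAt_id y).const_smul α).const_add u
      have := (((hL (u + α • y)).hasFDerivAt.comp y hin).const_sub
        (Real.log (gaussDensity d σ u))).const_mul (gaussDensity d σ u)
      refine this.congr_fderiv ?_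
      ext v
      simp
      ring)
  rw [hasGradientAt_iff_hasFDerivAt]
  refine key.congr_fderiv ?_
  have hcomm := (toDual ℝ (𝔼 d)).toContinuousLinearEquiv.integral_comp_comm
    (μ := volume) (fun u => -α • gaussDensity d σ u • s (u + α • z))
  rw [integral_smul] at hcomm
  exact hcomm

/-- **Gradient of the diffused KL objective (score-distillation / RED-diff update).**
Let `p` be a `C¹` everywhere-positive probability density with Lipschitz score
`s = ∇ log p`, let `ε_θ = −σ s` be the noise-prediction function, and let
`F(z) = KL(N(αz, σ²I) ‖ p) = ∫ φ_σ(x − αz) log(φ_σ(x − αz)/p(x)) dx`.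
Then `F` is finite and differentiable, and
`∇F(z) = (α/σ) ∫ (ε_θ(αz + σε) − ε) dγ(ε)` with `γ = N(0, I)`. -/
theorem gradient_kl_gaussian_vs_prior
    {d : ℕ} (hd : 1 ≤ d)
    (p : EuclideanSpace ℝ (Fin d) → ℝ) (hppos : ∀ x, 0 < p x)
    (hpC1 : ContDiff ℝ 1 p) (hpmass : ∫ x, p x = 1)
    (s : EuclideanSpace ℝ (Fin d) → EuclideanSpace ℝ (Fin d))
    (hs : ∀ x, s x = gradient (fun y => Real.log (p y)) x)
    (K : NNReal) (hK : LipschitzWith K s)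
    (α σ : ℝ) (hα : 0 < α) (hσ : 0 < σ)
    (εθ : EuclideanSpace ℝ (Fin d) → EuclideanSpace ℝ (Fin d))
    (hεθ : ∀ x, εθ x = -σ • s x)
    (F : EuclideanSpace ℝ (Fin d) → ℝ)
    (hF : ∀ z, F z = ∫ x,
      gaussDensity d σ (x - α • z) * Real.log (gaussDensity d σ (x - α • z) / p x)) :
    (∀ z : EuclideanSpace ℝ (Fin d),
        Integrable (fun x =>
          gaussDensity d σ (x - α • z) * Real.log (gaussDensity d σ (x - α • z) / p x))) ∧
      Differentiable ℝ F ∧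
      ∀ z : EuclideanSpace ℝ (Fin d),
        gradient F z = (α / σ) • ∫ ε, (εθ (α • z + σ • ε) - ε) ∂stdGaussian d := by
  set L : EuclideanSpace ℝ (Fin d) → ℝ := fun y => Real.log (p y) with hLdef
  have hL : ∀ x, HasGradientAt L (s x) x := by
    intro x
    rw [hs x]
    exact (((hpC1.differentiable one_ne_zero) x).log (hppos x).ne').hasGradientAt
  have hint : ∀ z x : EuclideanSpace ℝ (Fin d),
      gaussDensity d σ (x - α • z) * Real.log (gaussDensity d σ (x - α • z) / p x)
        = (fun u => gaussDensity d σ u * (Real.log (gaussDensity d σ u) - L (u + α • z)))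
            (x - α • z) := by
    intro z x
    simp only [hLdef, sub_add_cancel]
    rw [Real.log_div (gaussDensity_pos d hσ _).ne' (hppos x).ne']
  have hFeq : F = fun z =>
      ∫ u, gaussDensity d σ u * (Real.log (gaussDensity d σ u) - L (u + α • z)) := by
    funext z
    rw [hF z]
    simp_rw [hint z]
    exact integral_sub_right_eq_self (μ := volume)
      (fun u => gaussDensity d σ u * (Real.log (gaussDensity d σ u) - L (u + α • z))) (α • z)
  have hgrad : ∀ z, HasGradientAt F (-α • ∫ u, gaussDensity d σ u • s (u + α • z)) z := by
    intro z
    rw [hFeq]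
    exact hasGradientAt_objective hσ α hK hL z
  refine ⟨fun z => ?_, fun z => (hgrad z).differentiableAt, fun z => ?_⟩
  · simp_rw [hint z]
    exact (integrable_gauss_log_sub hσ hK hL (α • z)).comp_sub_right (α • z)
  · rw [(hgrad z).gradient, integral_gauss_scale hσ, integral_stdGaussian]
    -- The map `v ↦ s (α z + σ v)` is itself Lipschitz, hence of linear growth.
    have hlip : LipschitzWith (K * ‖σ‖₊) (fun v => s (σ • v + α • z)) :=
      by
      refine hK.comp (LipschitzWith.of_dist_le_mul fun v w => ?_)
      rw [dist_add_right, dist_smul₀, coe_nnnorm]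
    have hi1 : Integrable
        (fun v => -σ • (gaussDensity d 1 v • s (σ • v + α • z))) :=
      (integrable_gauss_smul one_pos hlip.continuous _
        (fun v => by simpa using growth_shift hlip (w := 0) (R := 0) (by simp) v)).smul (-σ)
    have hi2 : Integrable (fun v : EuclideanSpace ℝ (Fin d) => gaussDensity d 1 v • v) :=
      integrable_gauss_smul one_pos continuous_id 1
        (fun v => by nlinarith [sq_nonneg (‖v‖ - 1), norm_nonneg v, sq_nonneg ‖v‖])
    have hsplit : ∀ v, gaussDensity d 1 v • (εθ (α • z + σ • v) - v)
        = -σ • (gaussDensity d 1 v • s (σ • v + α • z)) - gaussDensity d 1 v • v := by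
      intro v
      rw [hεθ, smul_sub, smul_comm, add_comm (α • z)]
    simp_rw [hsplit]
    rw [integral_sub hi1 hi2, integral_gauss_id, sub_zero, integral_smul, smul_smul]
    congr 1
    field_simp
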